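/- Let r and d be integers with 2 ≤ d < r, let ε be the rectangular partition consisting of d parts all equal to r − d, let m = d(r − d) + 1, and let ε+p(2) denote the partition (r − d + 1, r − d + 1, r − d, …, r − d) with d parts, obtained from ε by adding one box to each of the first two rows. Then 2 r (r − 1) · f^{ε+p(2)} = m (m + 1) d (d − 1) · f^{ε}. -/

import Mathlib

/-!
Removing the largest entry of a standard Young tableau gives the branching rule
`f^λ = ∑ f^(λ - corner)`. In terms of the β-numbers `x i` of `λ`, removing a box of row `i` lowers
`x i` by one; the same move at a row without a corner makes two β-numbers coincide or has the
coefficient `x i = 0`, so it contributes nothing to a Vandermonde product. Hence Frobenius' formula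
`f^λ * ∏ i, (x i)! = |λ|! * ∏ i < j, (x i - x j)` reduces to the evaluation of
`∑ i, x i * ∏ a < b, (x a - x b)` with `x i` lowered by one in the `i`-th summand, which is the
trace of a matrix once the columns of the Vandermonde matrix are replaced by rising factorials.

Passing from `ε` to `ε + p(2)` raises only the two largest β-numbers, each by one, so in the ratio
of the two instances of the formula almost everything cancels.
-/

/-- The cells of the Young diagram of the partition `l = (l 0, l 1, …, l (q-1))`:
the pair `⟨i, j⟩` is a cell iff `j < l i` (row `i`, column `j`, zero-indexed). -/
def sytShape (q : ℕ) (l : Fin q → ℕ) : Finset (Σ _ : Fin q, ℕ) :=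
  Finset.univ.sigma fun i => Finset.range (l i)

/-- `T` is a standard Young tableau of shape `l`: it is a bijective labelling of the
cells of the diagram by `1, …, |λ|` (here realized as `Fin (∑ i, l i)`) whose entries
strictly increase along each row and strictly increase down each column. -/
def IsSYT {q : ℕ} (l : Fin q → ℕ)
    (T : {x // x ∈ sytShape q l} ≃ Fin (∑ i, l i)) : Prop :=
  (∀ x y : {x // x ∈ sytShape q l},
      (x : Σ _ : Fin q, ℕ).1 = (y : Σ _ : Fin q, ℕ).1 →
      (x : Σ _ : Fin q, ℕ).2 < (y : Σ _ : Fin q, ℕ).2 → T x < T y) ∧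
  (∀ x y : {x // x ∈ sytShape q l},
      (x : Σ _ : Fin q, ℕ).1 < (y : Σ _ : Fin q, ℕ).1 →
      (x : Σ _ : Fin q, ℕ).2 = (y : Σ _ : Fin q, ℕ).2 → T x < T y)

/-- `f^λ`, the number of standard Young tableaux of shape `λ = l`. -/
noncomputable def sytCount (q : ℕ) (l : Fin q → ℕ) : ℕ :=
  Nat.card {T : {x // x ∈ sytShape q l} ≃ Fin (∑ i, l i) // IsSYT l T}

open Finset Matrix
open scoped Nat

section LinearExtensions

variable {α : Type*} (r : α → α → Prop) (S : Finset α)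

/-- The number of linear extensions of the relation `r` on the finite set `S`: bijections
`e : S ≃ {0, …, |S| - 1}` with `e x < e y` whenever `r x y`. The relation need not be transitive. -/
noncomputable def linearExtensionCount : ℕ :=
  Nat.card {e : S ≃ Fin #S // ∀ x y : S, r x y → e x < e y}

variable {r S}

theorem linearExtensionCount_eq_of_card_eq {n : ℕ} (hn : #S = n) :
    linearExtensionCount r S = Nat.card {e : S ≃ Fin n // ∀ x y : S, r x y → e x < e y} := by
  subst hn
  rfl

theorem linearExtensionCount_empty : linearExtensionCount r ∅ = 1 := by
  have : Unique {e : (∅ : Finset α) ≃ Fin 0 // ∀ x y : (∅ : Finset α), r x y → e x < e y} :=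
    { default := ⟨Equiv.equivOfIsEmpty _ _, fun x => isEmptyElim x⟩
      uniq := fun _ => Subtype.ext (Subsingleton.elim _ _) }
  rw [linearExtensionCount_eq_of_card_eq card_empty, Nat.card_unique]

variable [DecidableEq α]

/-- Forgetting the label of `a` identifies the labellings of `S` that give `a` the largest label
with the labellings of `S \ {a}`. -/
def removeLastEquiv {n : ℕ} {a : α} (ha : a ∈ S) :
    {e : S ≃ Fin (n + 1) // e.symm (Fin.last n) = ⟨a, ha⟩} ≃ (S.erase a ≃ Fin n) :=
  let optionErase : S ≃ Option (S.erase a) :=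
    (Equiv.subtypeEquivRight fun x => by rw [insert_erase ha]).trans
      (subtypeInsertEquivOption (notMem_erase a S))
  ((optionErase.equivCongr (Equiv.refl _)).subtypeEquiv fun e => by
      rw [Equiv.symm_apply_eq, eq_comm]; rfl).trans <|
    (Equiv.optionSubtype (Fin.last n)).trans <|
      (Equiv.refl _).equivCongr (finSuccAboveEquiv (Fin.last n)).symm

theorem castSucc_removeLastEquiv {n : ℕ} {a : α} (ha : a ∈ S)
    (e : {e : S ≃ Fin (n + 1) // e.symm (Fin.last n) = ⟨a, ha⟩}) (x : S.erase a) :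
    (removeLastEquiv ha e x).castSucc = e.1 ⟨x, mem_of_mem_erase x.2⟩ := by
  simp only [removeLastEquiv, Equiv.trans_apply, Equiv.equivCongr_apply_apply, Equiv.refl_symm,
    Equiv.refl_apply, finSuccAboveEquiv_symm_apply_last]
  rfl

theorem increasing_iff_removeLastEquiv {n : ℕ} {a : α} (ha : a ∈ S)
    (e : {e : S ≃ Fin (n + 1) // e.symm (Fin.last n) = ⟨a, ha⟩}) :
    (∀ x y : S, r x y → e.1 x < e.1 y) ↔
      (∀ b ∈ S, ¬ r a b) ∧
        ∀ x y : S.erase a, r x y → removeLastEquiv ha e x < removeLastEquiv ha e y := by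
  have label_a : e.1 ⟨a, ha⟩ = Fin.last n := ((Equiv.symm_apply_eq _).1 e.2).symm
  have lt_iff (x y : S.erase a) : removeLastEquiv ha e x < removeLastEquiv ha e y ↔
      e.1 ⟨x, mem_of_mem_erase x.2⟩ < e.1 ⟨y, mem_of_mem_erase y.2⟩ := by
    rw [← Fin.castSucc_lt_castSucc_iff, castSucc_removeLastEquiv, castSucc_removeLastEquiv]
  simp only [lt_iff]
  refine ⟨fun h => ⟨fun b hb hab => ?_, fun x y hxy => h _ _ hxy⟩, fun ⟨h_max, h⟩ x y hxy => ?_⟩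
  · exact (Fin.le_last _).not_gt (label_a ▸ h ⟨a, ha⟩ ⟨b, hb⟩ hab)
  · have hx : (x : α) ≠ a := fun hx => h_max y y.2 (hx ▸ hxy)
    obtain hy | hy := eq_or_ne (y : α) a
    · obtain rfl : y = ⟨a, ha⟩ := Subtype.ext hy
      rw [label_a, Fin.lt_last_iff_ne_last]
      exact fun h => hx (congrArg Subtype.val (e.1.injective (h.trans label_a.symm)))
    · exact h ⟨x, mem_erase.2 ⟨hx, x.2⟩⟩ ⟨y, mem_erase.2 ⟨hy, y.2⟩⟩ hxy

theorem linearExtensionCount_eq_sum_erase [DecidableRel r] (hS : S.Nonempty) :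
    linearExtensionCount r S =
      ∑ a ∈ S with ∀ b ∈ S, ¬ r a b, linearExtensionCount r (S.erase a) := by
  obtain ⟨n, hn⟩ := Nat.exists_eq_add_one.2 hS.card_pos
  let Inc : (S ≃ Fin (n + 1)) → Prop := fun e => ∀ x y : S, r x y → e x < e y
  have fiber (a : S) :
      Nat.card {e : {e // Inc e} // e.1.symm (Fin.last n) = a} =
        if ∀ b ∈ S, ¬ r a b then linearExtensionCount r (S.erase a) else 0 := by
    have hcard : #(S.erase a) = n := by rw [card_erase_of_mem a.2, hn, Nat.add_sub_cancel]
    let swap : {e : {e // Inc e} // e.1.symm (Fin.last n) = a} ≃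
        {e : {e : S ≃ Fin (n + 1) // e.symm (Fin.last n) = a} // Inc e.1} :=
      ⟨fun e => ⟨⟨e.1.1, e.2⟩, e.1.2⟩, fun e => ⟨⟨e.1.1, e.2⟩, e.1.2⟩, fun _ => rfl, fun _ => rfl⟩
    have remove_last : {e : {e // Inc e} // e.1.symm (Fin.last n) = a} ≃
        {f : S.erase a ≃ Fin n // (∀ b ∈ S, ¬ r a b) ∧ ∀ x y : S.erase a, r x y → f x < f y} :=
      swap.trans ((removeLastEquiv a.2).subtypeEquiv (increasing_iff_removeLastEquiv a.2))
    rw [linearExtensionCount_eq_of_card_eq hcard, Nat.card_congr remove_last]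
    split_ifs with h_max
    · exact Nat.card_congr (Equiv.subtypeEquivRight fun _ => and_iff_right h_max)
    · have : IsEmpty {f : S.erase a ≃ Fin n //
          (∀ b ∈ S, ¬ r a b) ∧ ∀ x y : S.erase a, r x y → f x < f y} := ⟨fun f => h_max f.2.1⟩
      exact Nat.card_of_isEmpty
  rw [linearExtensionCount_eq_of_card_eq hn,
    ← Nat.card_congr (Equiv.sigmaFiberEquiv fun e : {e // Inc e} => e.1.symm (Fin.last n)),
    Nat.card_sigma, sum_congr rfl fun a _ => fiber a,
    sum_coe_sort S fun a => if ∀ b ∈ S, ¬ r a b then linearExtensionCount r (S.erase a) else 0,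
    sum_filter]

end LinearExtensions

section Branching

variable {q : ℕ}

/-- The order conditions on the entries of a standard Young tableau: `x` is to the left of `y` in
the same row, or above `y` in the same column. -/
abbrev CellBefore (x y : Σ _ : Fin q, ℕ) : Prop :=
  x.1 = y.1 ∧ x.2 < y.2 ∨ x.1 < y.1 ∧ x.2 = y.2

/-- The rows of `l` whose last box is a corner, i.e. can be removed to leave a partition. -/
def cornerRows (l : Fin q → ℕ) : Finset (Fin q) := {i | 0 < l i ∧ ∀ i' > i, l i' < l i}

/-- The shape obtained from `l` by removing the last box of row `i` (if there is one). -/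
def removeBox (l : Fin q → ℕ) (i : Fin q) : Fin q → ℕ := Function.update l i (l i - 1)

variable {l : Fin q → ℕ} {i : Fin q}

theorem mem_sytShape {x : Σ _ : Fin q, ℕ} : x ∈ sytShape q l ↔ x.2 < l x.1 := by
  simp [sytShape]

theorem card_sytShape : #(sytShape q l) = ∑ i, l i := by
  simp [sytShape]

theorem mem_cornerRows : i ∈ cornerRows l ↔ 0 < l i ∧ ∀ i' > i, l i' < l i := by
  simp [cornerRows]

theorem sytCount_eq_linearExtensionCount :
    sytCount q l = linearExtensionCount CellBefore (sytShape q l) := by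
  rw [linearExtensionCount_eq_of_card_eq card_sytShape, sytCount]
  refine Nat.card_congr (Equiv.subtypeEquivRight fun T => ?_)
  simp only [IsSYT, CellBefore, or_imp, and_imp, forall_and]

theorem sytShape_removeBox (hi : 0 < l i) :
    sytShape q (removeBox l i) = (sytShape q l).erase ⟨i, l i - 1⟩ := by
  ext ⟨a, b⟩
  obtain rfl | ha := eq_or_ne a i
  · simp only [mem_sytShape, removeBox, Function.update_self, mem_erase, ne_eq, Sigma.mk.injEq,
      heq_eq_eq, true_and]
    omega
  · simp [mem_sytShape, removeBox, ha]

theorem maximal_cells_sytShape :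
    {x ∈ sytShape q l | ∀ y ∈ sytShape q l, ¬ CellBefore x y} =
      (cornerRows l).image fun i => ⟨i, l i - 1⟩ := by
  ext ⟨i, j⟩
  simp only [mem_filter, mem_image, mem_cornerRows, mem_sytShape]
  constructor
  · rintro ⟨hj, h_max⟩
    have hj' : j = l i - 1 := by
      by_contra hne
      exact h_max ⟨i, l i - 1⟩ (by simp only; omega) (.inl ⟨rfl, by simp only; omega⟩)
    refine ⟨i, ⟨by omega, fun i' hi' => ?_⟩, by rw [hj']⟩
    by_contra hle
    exact h_max ⟨i', j⟩ (by simp only; omega) (.inr ⟨hi', rfl⟩)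
  · rintro ⟨i', ⟨hpos, h_corner⟩, heq⟩
    cases heq
    refine ⟨by omega, ?_⟩
    rintro ⟨a, b⟩ hab (⟨rfl, hlt⟩ | ⟨hlt, rfl⟩)
    · simp only at hab hlt
      omega
    · have := h_corner a hlt
      simp only at hab
      omega

theorem sytCount_zero : sytCount q 0 = 1 := by
  have : sytShape q 0 = ∅ := by ext; simp [mem_sytShape]
  rw [sytCount_eq_linearExtensionCount, this, linearExtensionCount_empty]

theorem sytCount_eq_sum_removeBox (hl : 0 < ∑ i, l i) :
    sytCount q l = ∑ i ∈ cornerRows l, sytCount q (removeBox l i) := by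
  rw [sytCount_eq_linearExtensionCount, linearExtensionCount_eq_sum_erase
    (card_pos.1 (card_sytShape.symm ▸ hl)), maximal_cells_sytShape,
    sum_image fun i _ i' _ h => congrArg Sigma.fst h]
  refine sum_congr rfl fun i hi => ?_
  rw [sytCount_eq_linearExtensionCount, sytShape_removeBox (mem_cornerRows.1 hi).1]

theorem antitone_removeBox (hl : Antitone l) (hi : i ∈ cornerRows l) :
    Antitone (removeBox l i) := by
  intro a b hab
  have hle := hl hab
  have h_corner := (mem_cornerRows.1 hi).2 b
  simp only [removeBox, Function.update_apply]
  grind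

theorem sum_removeBox_add_one (hi : 0 < l i) : ∑ a, removeBox l i a + 1 = ∑ a, l a := by
  rw [removeBox, sum_update_of_mem (mem_univ i),
    sdiff_singleton_eq_erase, ← add_sum_erase univ l (mem_univ i)]
  omega

end Branching

section ShiftedVandermonde

theorem sum_det_updateRow {n R : Type*} [Fintype n] [DecidableEq n] [CommRing R]
    (A B : Matrix n n R) : ∑ i, (A.updateRow i (B i)).det = (B * A.adjugate).trace := by
  simp only [← cramer_transpose_apply, cramer_eq_adjugate_mulVec, ← adjugate_transpose,
    mulVec_transpose, trace, diag_apply, mul_apply, vecMul, dotProduct]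

theorem sum_mul_det_vandermonde_update {R : Type*} [CommRing R] [IsDomain R] {n : ℕ}
    (v : Fin n → R) :
    ∑ i, v i * (vandermonde (Function.update v i (v i + 1))).det =
      (∑ i, v i + ∑ i : Fin n, (i : R)) * (vandermonde v).det := by
  let A (w : Fin n → R) : Matrix (Fin n) (Fin n) R := of fun i j => (ascPochhammer R j).eval (w i)
  have det_A (w : Fin n → R) : (vandermonde w).det = (A w).det :=
    det_eval_matrixOfPolynomials_eq_det_vandermonde w (fun j => ascPochhammer R j)
      (fun j => ascPochhammer_natDegree R j) fun j => monic_ascPochhammer R j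
  have shift (x : R) (k : ℕ) :
      x * (ascPochhammer R k).eval (x + 1) = (x + k) * (ascPochhammer R k).eval x := by
    have h := congrArg (Polynomial.eval x) (ascPochhammer_succ_left R k)
    rw [ascPochhammer_succ_eval] at h
    simpa [mul_comm] using h.symm
  -- The operator `p(x) ↦ x * p(x + 1)` multiplies the `k`-th rising factorial by `x + k`, so each
  -- summand replaces row `i` of `A v` by row `i` of one matrix `D * A v + A v * D'`, with `D`, `D'`
  -- diagonal.
  have row (i : Fin n) : v i * (A (Function.update v i (v i + 1))).det =
      ((A v).updateRow i ((diagonal v * A v + A v * diagonal fun j : Fin n => (j : R)) i)).det := by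
    have hA : A (Function.update v i (v i + 1)) = (A v).updateRow i (A (fun _ => v i + 1) i) := by
      ext a b
      by_cases h : a = i <;> simp [A, updateRow_apply, h]
    rw [hA, ← det_updateRow_smul]
    congr 2
    ext j
    simp only [A, Pi.smul_apply, of_apply, smul_eq_mul, shift, Matrix.add_apply, diagonal_mul,
      mul_diagonal]
    ring
  simp only [det_A, row, sum_det_updateRow]
  rw [add_mul, trace_add, trace_mul_cycle (A v), adjugate_mul, mul_assoc, mul_adjugate]
  simp [trace_diagonal, ← mul_comm (A v).det, mul_add]

end ShiftedVandermonde

section DifferenceProduct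

variable {q : ℕ}

/-- The product of the differences `x i - x j` over `i < j`. -/
def diffProd (x : Fin q → ℕ) : ℤ := ∏ i, ∏ j ∈ Ioi i, ((x i : ℤ) - x j)

theorem diffProd_eq_det_vandermonde (x : Fin q → ℕ) :
    diffProd x = (vandermonde fun i => -(x i : ℤ)).det := by
  simp [diffProd, det_vandermonde, sub_eq_neg_add, add_comm]

theorem diffProd_eq_zero {x : Fin q → ℕ} {i j : Fin q} (hij : i ≠ j) (hx : x i = x j) :
    diffProd x = 0 := by
  rw [diffProd_eq_det_vandermonde, det_vandermonde_eq_zero_iff]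
  exact ⟨i, j, by rw [hx], hij⟩

theorem diffProd_vecCons (a : ℕ) (x : Fin q → ℕ) :
    diffProd (vecCons a x) = (∏ i, ((a : ℤ) - x i)) * diffProd x := by
  simp [diffProd, Fin.prod_univ_succ, Fin.prod_Ioi_succ]

theorem sum_mul_diffProd_update (x : Fin q → ℕ) :
    ∑ i, (x i : ℤ) * diffProd (Function.update x i (x i - 1)) =
      (∑ i, (x i : ℤ) - ∑ i : Fin q, (i : ℤ)) * diffProd x := by
  have term (i : Fin q) : (x i : ℤ) * diffProd (Function.update x i (x i - 1)) =
      -(-(x i : ℤ) * (vandermonde (Function.update (fun a => -(x a : ℤ)) i (-x i + 1))).det) := by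
    obtain h0 | hpos := (x i).eq_zero_or_pos
    · simp [h0]
    · rw [diffProd_eq_det_vandermonde, neg_mul, neg_neg]
      congr 3
      ext a
      by_cases h : a = i
      · rw [h, Function.update_self, Function.update_self, Nat.cast_sub hpos, Nat.cast_one]
        ring
      · simp [h]
  rw [sum_congr rfl fun i _ => term i, sum_neg_distrib, sum_mul_det_vandermonde_update,
    ← diffProd_eq_det_vandermonde, sum_neg_distrib]
  ring

end DifferenceProduct

section FrobeniusFormula

variable {q : ℕ}

/-- The β-numbers `l i + (q - 1 - i)` of a shape with `q` rows; for a partition without zero parts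
these are the hook lengths of the first column. -/
def betaNumber (l : Fin q → ℕ) (i : Fin q) : ℕ := l i + i.rev

theorem betaNumber_vecCons (a : ℕ) (l : Fin q → ℕ) :
    betaNumber (vecCons a l) = vecCons (a + q) (betaNumber l) := by
  ext i
  refine Fin.cases ?_ (fun j => ?_) i <;> simp [betaNumber, Fin.rev_succ]

theorem betaNumber_removeBox {l : Fin q → ℕ} {i : Fin q} (hi : 0 < l i) :
    betaNumber (removeBox l i) = Function.update (betaNumber l) i (betaNumber l i - 1) := by
  ext a
  obtain rfl | ha := eq_or_ne a i
  · simp only [betaNumber, removeBox, Function.update_self]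
    omega
  · simp [betaNumber, removeBox, ha]

theorem sum_betaNumber (l : Fin q → ℕ) :
    ∑ i, (betaNumber l i : ℤ) = ∑ i, (l i : ℤ) + ∑ i : Fin q, (i : ℤ) := by
  rw [← Equiv.sum_comp Fin.revPerm fun i : Fin q => (i : ℤ), ← sum_add_distrib]
  simp [betaNumber]

theorem prod_sub_betaNumber_const (s c e : ℕ) :
    ∏ i, (((s + e + c : ℕ) : ℤ) - betaNumber (fun _ : Fin e => s) i) = (c + 1).ascFactorial e := by
  rw [Nat.ascFactorial_eq_prod_range, prod_range, Nat.cast_prod]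
  refine prod_congr rfl fun i _ => ?_
  simp only [betaNumber, Fin.val_rev]
  omega

theorem diffProd_betaNumber_zero :
    diffProd (betaNumber (0 : Fin q → ℕ)) = ∏ i, ((betaNumber (0 : Fin q → ℕ) i)! : ℤ) := by
  induction q with
  | zero => simp [diffProd]
  | succ q ih =>
    have h := prod_sub_betaNumber_const 0 0 q
    have hcons : (0 : Fin (q + 1) → ℕ) = vecCons 0 0 := by simp
    rw [hcons, betaNumber_vecCons, diffProd_vecCons, ih, Fin.prod_univ_succ]
    simp only [cons_val_zero, cons_val_succ]
    congr 1
    simpa [Nat.one_ascFactorial, ← Pi.zero_def] using h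

theorem betaNumber_mul_diffProd_update_eq_zero {l : Fin q → ℕ} (hl : Antitone l) {i : Fin q}
    (hi : i ∉ cornerRows l) :
    (betaNumber l i : ℤ) * diffProd (Function.update (betaNumber l) i (betaNumber l i - 1)) =
      0 := by
  rw [mem_cornerRows] at hi
  by_cases hq : (i : ℕ) + 1 < q
  · let next : Fin q := ⟨i + 1, hq⟩
    have hlt : i < next := Fin.lt_def.2 (Nat.lt_succ_self i)
    have heq : l next = l i := by
      refine (hl hlt.le).eq_of_not_lt fun h => hi ⟨by omega, fun k hk => ?_⟩
      exact (hl (show next ≤ k from hk)).trans_lt h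
    rw [diffProd_eq_zero hlt.ne, mul_zero]
    rw [Function.update_self, Function.update_of_ne hlt.ne']
    simp only [betaNumber, heq, Fin.val_rev, next]
    omega
  · have h0 : l i = 0 := by
      by_contra h
      exact hi ⟨by omega, fun k hk => by omega⟩
    have : betaNumber l i = 0 := by
      simp only [betaNumber, h0, Fin.val_rev]
      omega
    simp [this]

theorem prod_factorial_update {x : Fin q → ℕ} {i : Fin q} (hi : 0 < x i) :
    ∏ a, (x a)! = x i * ∏ a, (Function.update x i (x i - 1) a)! := by
  simp only [← Function.comp_apply (f := Nat.factorial), Function.comp_update]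
  rw [prod_update_of_mem (mem_univ i), sdiff_singleton_eq_erase, ← mul_assoc,
    Function.comp_apply, Nat.mul_factorial_pred hi.ne', ← Function.comp_apply (f := Nat.factorial),
    mul_prod_erase univ _ (mem_univ i)]

theorem sytCount_mul_prod_factorial_betaNumber {l : Fin q → ℕ} (hl : Antitone l) :
    (sytCount q l : ℤ) * ∏ i, ((betaNumber l i)! : ℤ) =
      (∑ i, l i)! * diffProd (betaNumber l) := by
  induction hn : ∑ i, l i generalizing l with
  | zero =>
    obtain rfl : l = 0 := funext fun i => sum_eq_zero_iff.1 hn i (mem_univ i)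
    rw [sytCount_zero, diffProd_betaNumber_zero]
    simp
  | succ n ih =>
    let x := betaNumber l
    have branch (i : Fin q) (hi : i ∈ cornerRows l) :
        (sytCount q (removeBox l i) : ℤ) * ∏ a, ((x a)! : ℤ) =
          n ! * (x i * diffProd (Function.update x i (x i - 1))) := by
      have hpos := (mem_cornerRows.1 hi).1
      have hsum := sum_removeBox_add_one hpos
      have h := ih (antitone_removeBox hl hi) (by omega)
      rw [betaNumber_removeBox hpos] at h
      have hfact : ∏ a, (x a)! = x i * ∏ a, (Function.update x i (x i - 1) a)! :=
        prod_factorial_update (Nat.add_pos_left hpos _)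
      rw [← Nat.cast_prod, hfact]
      push_cast
      linear_combination (x i : ℤ) * h
    calc (sytCount q l : ℤ) * ∏ a, ((x a)! : ℤ)
      _ = ∑ i ∈ cornerRows l, (sytCount q (removeBox l i) : ℤ) * ∏ a, ((x a)! : ℤ) := by
        rw [sytCount_eq_sum_removeBox (by omega), Nat.cast_sum, sum_mul]
      _ = n ! * ∑ i ∈ cornerRows l, (x i : ℤ) * diffProd (Function.update x i (x i - 1)) := by
        rw [sum_congr rfl branch, mul_sum]
      _ = n ! * ∑ i, (x i : ℤ) * diffProd (Function.update x i (x i - 1)) := by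
        rw [sum_subset (subset_univ _) fun i _ hi => betaNumber_mul_diffProd_update_eq_zero hl hi]
      _ = n ! * ((n + 1) * diffProd x) := by
        rw [sum_mul_diffProd_update, sum_betaNumber, add_sub_cancel_right, ← Nat.cast_sum, hn]
        push_cast
        rfl
      _ = (n + 1)! * diffProd x := by
        rw [Nat.factorial_succ]
        push_cast
        ring

end FrobeniusFormula

section Rectangle

variable (s e : ℕ)

theorem betaNumber_rectangle :
    betaNumber (fun _ : Fin (e + 2) => s) =
      vecCons (s + e + 1) (vecCons (s + e) (betaNumber fun _ : Fin e => s)) := by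
  rw [← betaNumber_vecCons, add_assoc, ← betaNumber_vecCons]
  congr 1
  ext i
  refine Fin.cases rfl (Fin.cases rfl fun _ => rfl) i

theorem betaNumber_rectangle_add_two :
    betaNumber (fun i : Fin (e + 2) => if (i : ℕ) < 2 then s + 1 else s) =
      vecCons (s + e + 2) (vecCons (s + e + 1) (betaNumber fun _ : Fin e => s)) := by
  rw [show s + e + 2 = s + 1 + (e + 1) by omega, add_right_comm s e 1, ← betaNumber_vecCons,
    ← betaNumber_vecCons]
  congr 1
  ext i
  refine Fin.cases rfl (Fin.cases rfl fun _ => rfl) i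

theorem two_mul_diffProd_rectangle_add_two :
    2 * diffProd (betaNumber fun i : Fin (e + 2) => if (i : ℕ) < 2 then s + 1 else s) =
      (e + 2) * (e + 1) * diffProd (betaNumber fun _ : Fin (e + 2) => s) := by
  have ratio : 2 * Nat.ascFactorial 3 e = (e + 2) * ((e + 1) * Nat.ascFactorial 1 e) :=
    calc 2 * Nat.ascFactorial 3 e
      _ = (e + 2)! := (Nat.factorial_mul_ascFactorial 2 e).trans (by rw [add_comm])
      _ = (e + 2) * ((e + 1) * Nat.ascFactorial 1 e) := by
        rw [Nat.one_ascFactorial, Nat.factorial_succ, Nat.factorial_succ]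
  have prod_zero : ∏ i, (((s + e : ℕ) : ℤ) - betaNumber (fun _ : Fin e => s) i) =
      Nat.ascFactorial 1 e := prod_sub_betaNumber_const s 0 e
  have prod_one : ∏ i, (((s + e + 1 : ℕ) : ℤ) - betaNumber (fun _ : Fin e => s) i) =
      Nat.ascFactorial 2 e := prod_sub_betaNumber_const s 1 e
  have prod_two : ∏ i, (((s + e + 2 : ℕ) : ℤ) - betaNumber (fun _ : Fin e => s) i) =
      Nat.ascFactorial 3 e := prod_sub_betaNumber_const s 2 e
  rw [betaNumber_rectangle, betaNumber_rectangle_add_two]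
  simp only [diffProd_vecCons, Fin.prod_univ_succ, cons_val_zero, cons_val_succ]
  rw [prod_zero, prod_one, prod_two]
  zify at ratio
  push_cast
  linear_combination Nat.ascFactorial 2 e * diffProd (betaNumber fun _ : Fin e => s) * ratio

theorem prod_factorial_rectangle_add_two :
    ∏ i, (betaNumber (fun i : Fin (e + 2) => if (i : ℕ) < 2 then s + 1 else s) i)! =
      (s + e + 2) * (s + e + 1) * ∏ i, (betaNumber (fun _ : Fin (e + 2) => s) i)! := by
  simp only [betaNumber_rectangle, betaNumber_rectangle_add_two, Fin.prod_univ_succ, cons_val_zero,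
    cons_val_succ, Nat.factorial_succ]
  ring

theorem antitone_rectangle_add_two :
    Antitone fun i : Fin (e + 2) => if (i : ℕ) < 2 then s + 1 else s := by
  intro a b hab
  have : (a : ℕ) ≤ b := hab
  dsimp only
  split_ifs <;> omega

theorem sum_rectangle_add_two :
    ∑ i : Fin (e + 2), (if (i : ℕ) < 2 then s + 1 else s) = (e + 2) * s + 2 := by
  have h : s + 1 + (s + 1 + e * s) = (e + 2) * s + 2 := by ring
  simpa [Fin.sum_univ_succ] using h

end Rectangle

/-- For `2 ≤ d < r`, `ε` the rectangular partition with `d` parts equal to `r - d`,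
`m = d(r-d) + 1`, and `ε + p(2)` the partition obtained from `ε` by adding one box to
each of the first two rows, one has `2r(r-1) · f^{ε+p(2)} = m(m+1)d(d-1) · f^{ε}`. -/
theorem syt_count_eps_plus_col_two (r d : ℕ) (hd : 2 ≤ d) (hdr : d < r) :
    2 * r * (r - 1) * sytCount d (fun i => if (i : ℕ) < 2 then r - d + 1 else r - d) =
      (d * (r - d) + 1) * (d * (r - d) + 1 + 1) * d * (d - 1) *
        sytCount d (fun _ => r - d) := by
  obtain ⟨e, rfl⟩ := Nat.exists_eq_add_of_le' hd
  obtain ⟨s, rfl⟩ := Nat.exists_eq_add_of_le' hdr.le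
  rw [Nat.add_sub_cancel, ← add_assoc, Nat.add_succ_sub_one, Nat.add_succ_sub_one]
  have rectangle := sytCount_mul_prod_factorial_betaNumber
    (l := fun _ : Fin (e + 2) => s) antitone_const
  have enlarged := sytCount_mul_prod_factorial_betaNumber (antitone_rectangle_add_two s e)
  have diffProd_ratio := two_mul_diffProd_rectangle_add_two s e
  have prod_ne_zero : ∏ i, ((betaNumber (fun _ : Fin (e + 2) => s) i)! : ℤ) ≠ 0 :=
    prod_ne_zero_iff.2 fun i _ => Nat.cast_ne_zero.2 (Nat.factorial_ne_zero _)
  rw [Fin.sum_const, smul_eq_mul] at rectangle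
  rw [sum_rectangle_add_two, ← Nat.cast_prod, prod_factorial_rectangle_add_two,
    Nat.factorial_succ, Nat.factorial_succ] at enlarged
  refine Nat.cast_injective (R := ℤ) (mul_right_cancel₀ prod_ne_zero ?_)
  push_cast at rectangle enlarged ⊢
  linear_combination 2 * enlarged +
    ((e + 2) * s + 1) * ((e + 2) * s + 1 + 1) *
      (((e + 2) * s)! * diffProd_ratio - (e + 2) * (e + 1) * rectangle)
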